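/- Let Δ be a program and M ⊆ B_L a subset with T_Δ(M) = M. Then M ⊨ D for every D ∈ Δ, i.e., M is a model of Δ. -/

import Mathlib

/-!
A fixed point of `T_Δ` is a model because `T_D(M) ⊆ M` alone already forces `M ⊨ D`, for every
clause `D` (`clSat_of_TOp_subset`, by induction on the size of `D`): `T_D` is defined by the same
recursion as satisfaction, with unions in place of universal quantification, so the inclusion passes
to every instance of `D`, and at an atom `M ∪ {A} ⊆ M` says `A ∈ M`. For an implication `G ⇒ D` only
the case `M ⊨ G` matters, where `T_{G ⇒ D}(M) = T_D(M)`. Since `T_D(M) ⊆ T_Δ(M) = M` for `D ∈ Δ`,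
the theorem follows.
-/

/-!  Nominal logic programming: common infrastructure. -/

noncomputable section
open scoped Classical
set_option linter.unusedVariables false
set_option linter.unreachableTactic false
set_option linter.unusedTactic false

/-- Sorts of a nominal signature: name sorts `ν`, data sorts `δ`,
and abstraction sorts `⟨ν⟩σ`. -/
inductive NomSort (N D : Type) : Type
  | name : N → NomSort N D
  | data : D → NomSort N D
  | nabs : N → NomSort N D → NomSort N D

/-- A nominal (many-sorted, first-order) signature. -/
structure NomSig : Type 1 where
  NSort : Type
  DSort : Type
  Func : Type
  Rel : Type
  fArgs : Func → List (NomSort NSort DSort)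
  fRes : Func → DSort
  rArgs : Rel → List (NomSort NSort DSort)

/-- Names: countably infinitely many for each name sort. -/
abbrev NomSig.Name (L : NomSig) : Type := L.NSort × ℕ

variable {L : NomSig}

/-- The transposition (a b) acting on names. -/
def swapName (a b c : L.Name) : L.Name :=
  if c = a then b else if c = b then a else c

/-- Nominal terms (possibly containing variables). -/
inductive Tm (L : NomSig) : Type
  | var : ℕ → Tm L
  | name : L.Name → Tm L
  | app : L.Func → List (Tm L) → Tm L
  | abs : L.Name → Tm L → Tm L

namespace Tm

/-- Apply a renaming of names to every name occurrence (including binding ones). -/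
def rename (f : L.Name → L.Name) : Tm L → Tm L
  | var X => var X
  | name c => name (f c)
  | app g ts => app g (ts.attach.map fun x => rename f x.1)
  | abs c t => abs (f c) (rename f t)
decreasing_by
  all_goals simp_wf
  all_goals first
    | (have := List.sizeOf_lt_of_mem x.2; omega)
    | omega

/-- The swapping `(a b)·t`. -/
def swap (a b : L.Name) (t : Tm L) : Tm L := t.rename (swapName a b)

/-- Apply a substitution of terms for variables. -/
def subst (θ : ℕ → Tm L) : Tm L → Tm L
  | var X => θ X
  | name c => name c
  | app g ts => app g (ts.attach.map fun x => subst θ x.1)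
  | abs c t => abs c (subst θ t)
decreasing_by
  all_goals simp_wf
  all_goals first
    | (have := List.sizeOf_lt_of_mem x.2; omega)
    | omega

/-- Syntactic free-name occurrence (a name occurring outside the scope of
an abstraction of the same name). -/
inductive FNa : L.Name → Tm L → Prop
  | name (a : L.Name) : FNa a (name a)
  | app (a : L.Name) (f : L.Func) (ts : List (Tm L)) (t : Tm L) :
      t ∈ ts → FNa a t → FNa a (app f ts)
  | abs (a b : L.Name) (t : Tm L) : a ≠ b → FNa a t → FNa a (abs b t)

/-- Free variable occurrence in a term. -/
inductive FVa : ℕ → Tm L → Prop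
  | var (X : ℕ) : FVa X (var X)
  | app (X : ℕ) (f : L.Func) (ts : List (Tm L)) (t : Tm L) :
      t ∈ ts → FVa X t → FVa X (app f ts)
  | abs (X : ℕ) (b : L.Name) (t : Tm L) : FVa X t → FVa X (abs b t)

end Tm

/-- The substitution `[t/X]`. -/
def substSingle (X : ℕ) (t : Tm L) : ℕ → Tm L := fun Y => if Y = X then t else Tm.var Y

/-- `IsTm t σ`: `t` is a well-sorted ground term of sort `σ`. -/
inductive IsTm : Tm L → NomSort L.NSort L.DSort → Prop
  | name (a : L.Name) : IsTm (Tm.name a) (NomSort.name a.1)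
  | app (f : L.Func) (ts : List (Tm L)) :
      ts.length = (L.fArgs f).length →
      (∀ p ∈ ts.zip (L.fArgs f), IsTm p.1 p.2) →
      IsTm (Tm.app f ts) (NomSort.data (L.fRes f))
  | abs (a : L.Name) (t : Tm L) (σ : NomSort L.NSort L.DSort) :
      IsTm t σ → IsTm (Tm.abs a t) (NomSort.nabs a.1 σ)

/-- Well-sortedness of a (possibly open) term relative to a sort
assignment `vs` for variables. -/
inductive TmS (vs : ℕ → NomSort L.NSort L.DSort) : Tm L → NomSort L.NSort L.DSort → Prop
  | var (X : ℕ) : TmS vs (Tm.var X) (vs X)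
  | name (a : L.Name) : TmS vs (Tm.name a) (NomSort.name a.1)
  | app (f : L.Func) (ts : List (Tm L)) :
      ts.length = (L.fArgs f).length →
      (∀ p ∈ ts.zip (L.fArgs f), TmS vs p.1 p.2) →
      TmS vs (Tm.app f ts) (NomSort.data (L.fRes f))
  | abs (a : L.Name) (t : Tm L) (σ : NomSort L.NSort L.DSort) :
      TmS vs t σ → TmS vs (Tm.abs a t) (NomSort.nabs a.1 σ)

/-- Freshness `a # t` on ground terms. -/
inductive Fresh : L.Name → Tm L → Prop
  | name (a b : L.Name) : a ≠ b → Fresh a (Tm.name b)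
  | app (a : L.Name) (f : L.Func) (ts : List (Tm L)) :
      (∀ t ∈ ts, Fresh a t) → Fresh a (Tm.app f ts)
  | absSame (a : L.Name) (t : Tm L) : Fresh a (Tm.abs a t)
  | absDiff (a b : L.Name) (t : Tm L) : a ≠ b → Fresh a t → Fresh a (Tm.abs b t)

/-- Alpha-equivalence `t ≈ u` on ground terms. -/
inductive Aeq : Tm L → Tm L → Prop
  | name (a : L.Name) : Aeq (Tm.name a) (Tm.name a)
  | app (f : L.Func) (ts us : List (Tm L)) :
      ts.length = us.length → (∀ p ∈ ts.zip us, Aeq p.1 p.2) →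
      Aeq (Tm.app f ts) (Tm.app f us)
  | absSame (a : L.Name) (t u : Tm L) : Aeq t u → Aeq (Tm.abs a t) (Tm.abs a u)
  | absDiff (a b : L.Name) (t u : Tm L) :
      Fresh a u → Aeq t (Tm.swap a b u) → Aeq (Tm.abs a t) (Tm.abs b u)

/-- The support of a ground term: the set of names not fresh for it. -/
def suppTm (t : Tm L) : Set L.Name := {a | ¬ Fresh a t}

/-- Finite sort-preserving bijections (permutations) of names. -/
def IsPerm (π : L.Name → L.Name) : Prop :=
  Function.Bijective π ∧ (∀ a, (π a).1 = a.1) ∧ {a | π a ≠ a}.Finite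

/-- `t ∼ u`: equal up to a permutation of names. -/
def SimTm (t u : Tm L) : Prop := ∃ π, IsPerm π ∧ Aeq (t.rename π) u

/-- Atomic formulas `p(t₁,…,tₙ)`. -/
structure NAtom (L : NomSig) : Type where
  rel : L.Rel
  args : List (Tm L)

def NAtom.rename (f : L.Name → L.Name) (A : NAtom L) : NAtom L :=
  ⟨A.rel, A.args.map (Tm.rename f)⟩

def NAtom.swap (a b : L.Name) (A : NAtom L) : NAtom L := A.rename (swapName a b)

def NAtom.subst (θ : ℕ → Tm L) (A : NAtom L) : NAtom L :=
  ⟨A.rel, A.args.map (Tm.subst θ)⟩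

def NAtom.FNa (a : L.Name) (A : NAtom L) : Prop := ∃ t ∈ A.args, Tm.FNa a t
def NAtom.FVa (X : ℕ) (A : NAtom L) : Prop := ∃ t ∈ A.args, Tm.FVa X t

/-- Alpha-equivalence of atoms. -/
def AtomAeq (A B : NAtom L) : Prop :=
  A.rel = B.rel ∧ A.args.length = B.args.length ∧ ∀ p ∈ A.args.zip B.args, Aeq p.1 p.2

/-- `A ∼ B` for atoms: equal up to a permutation of names. -/
def AtomSim (A B : NAtom L) : Prop := ∃ π, IsPerm π ∧ AtomAeq (A.rename π) B

/-- Well-sortedness of an atom relative to a variable sort assignment. -/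
def AtomS (vs : ℕ → NomSort L.NSort L.DSort) (A : NAtom L) : Prop :=
  A.args.length = (L.rArgs A.rel).length ∧ ∀ p ∈ A.args.zip (L.rArgs A.rel), TmS vs p.1 p.2

/-- The Herbrand base: all well-sorted ground atoms. -/
def BL (L : NomSig) : Set (NAtom L) :=
  {A | A.args.length = (L.rArgs A.rel).length ∧ ∀ p ∈ A.args.zip (L.rArgs A.rel), IsTm p.1 p.2}

/-- An equivariant set of atoms: closed under all same-sorted swappings. -/
def EquivariantSet (S : Set (NAtom L)) : Prop :=
  ∀ a b : L.Name, a.1 = b.1 → NAtom.swap a b '' S = S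


/-! ### Constraints -/

/-- Constraints `C`. -/
inductive NCon (L : NomSig) : Type
  | tt : NCon L
  | eq (t u : Tm L) : NCon L
  | fr (a : L.Name) (t : Tm L) : NCon L
  | sim (t u : Tm L) : NCon L
  | simA (A B : NAtom L) : NCon L
  | aeqA (A B : NAtom L) : NCon L
  | and (C C' : NCon L) : NCon L
  | ex (X : ℕ) (σ : NomSort L.NSort L.DSort) (C : NCon L) : NCon L
  | nu (a : L.Name) (C : NCon L) : NCon L

namespace NCon

def rename (f : L.Name → L.Name) : NCon L → NCon L
  | tt => tt
  | eq t u => eq (t.rename f) (u.rename f)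
  | fr a t => fr (f a) (t.rename f)
  | sim t u => sim (t.rename f) (u.rename f)
  | simA A B => simA (A.rename f) (B.rename f)
  | aeqA A B => aeqA (A.rename f) (B.rename f)
  | and C C' => and (rename f C) (rename f C')
  | ex X σ C => ex X σ (rename f C)
  | nu a C => nu (f a) (rename f C)

/-- Swapping `(a b)·C`, acting on all names (bound names included). -/
def swap (a b : L.Name) (C : NCon L) : NCon L := C.rename (swapName a b)

def subst (θ : ℕ → Tm L) : NCon L → NCon L
  | tt => tt
  | eq t u => eq (t.subst θ) (u.subst θ)
  | fr a t => fr a (t.subst θ)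
  | sim t u => sim (t.subst θ) (u.subst θ)
  | simA A B => simA (A.subst θ) (B.subst θ)
  | aeqA A B => aeqA (A.subst θ) (B.subst θ)
  | and C C' => and (subst θ C) (subst θ C')
  | ex X σ C => ex X σ (subst (Function.update θ X (Tm.var X)) C)
  | nu a C => nu a (subst θ C)

def size : NCon L → ℕ
  | and C C' => size C + size C' + 1
  | ex _ _ C => size C + 1
  | nu _ C => size C + 1
  | _ => 1

@[simp] theorem size_rename (f : L.Name → L.Name) :
    ∀ C : NCon L, (C.rename f).size = C.size := by
  intro C; induction C <;> simp [rename, size, *]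

@[simp] theorem size_swap (a b : L.Name) (C : NCon L) : (C.swap a b).size = C.size :=
  size_rename _ C

@[simp] theorem size_subst :
    ∀ (C : NCon L) (θ : ℕ → Tm L), (C.subst θ).size = C.size := by
  intro C; induction C <;> intro θ <;> simp [subst, size, *]

/-- Free names of a constraint. -/
inductive FNa : L.Name → NCon L → Prop
  | eq₁ (a : L.Name) (t u : Tm L) : Tm.FNa a t → FNa a (eq t u)
  | eq₂ (a : L.Name) (t u : Tm L) : Tm.FNa a u → FNa a (eq t u)
  | frN (a : L.Name) (t : Tm L) : FNa a (fr a t)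
  | frT (a c : L.Name) (t : Tm L) : Tm.FNa a t → FNa a (fr c t)
  | sim₁ (a : L.Name) (t u : Tm L) : Tm.FNa a t → FNa a (sim t u)
  | sim₂ (a : L.Name) (t u : Tm L) : Tm.FNa a u → FNa a (sim t u)
  | simA₁ (a : L.Name) (A B : NAtom L) : NAtom.FNa a A → FNa a (simA A B)
  | simA₂ (a : L.Name) (A B : NAtom L) : NAtom.FNa a B → FNa a (simA A B)
  | aeqA₁ (a : L.Name) (A B : NAtom L) : NAtom.FNa a A → FNa a (aeqA A B)
  | aeqA₂ (a : L.Name) (A B : NAtom L) : NAtom.FNa a B → FNa a (aeqA A B)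
  | and₁ (a : L.Name) (C C' : NCon L) : FNa a C → FNa a (and C C')
  | and₂ (a : L.Name) (C C' : NCon L) : FNa a C' → FNa a (and C C')
  | ex (a : L.Name) (X : ℕ) (σ : NomSort L.NSort L.DSort) (C : NCon L) :
      FNa a C → FNa a (ex X σ C)
  | nu (a c : L.Name) (C : NCon L) : a ≠ c → FNa a C → FNa a (nu c C)

/-- Free variables of a constraint. -/
inductive FVa : ℕ → NCon L → Prop
  | eq₁ (X : ℕ) (t u : Tm L) : Tm.FVa X t → FVa X (eq t u)
  | eq₂ (X : ℕ) (t u : Tm L) : Tm.FVa X u → FVa X (eq t u)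
  | frT (X : ℕ) (c : L.Name) (t : Tm L) : Tm.FVa X t → FVa X (fr c t)
  | sim₁ (X : ℕ) (t u : Tm L) : Tm.FVa X t → FVa X (sim t u)
  | sim₂ (X : ℕ) (t u : Tm L) : Tm.FVa X u → FVa X (sim t u)
  | simA₁ (X : ℕ) (A B : NAtom L) : NAtom.FVa X A → FVa X (simA A B)
  | simA₂ (X : ℕ) (A B : NAtom L) : NAtom.FVa X B → FVa X (simA A B)
  | aeqA₁ (X : ℕ) (A B : NAtom L) : NAtom.FVa X A → FVa X (aeqA A B)
  | aeqA₂ (X : ℕ) (A B : NAtom L) : NAtom.FVa X B → FVa X (aeqA A B)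
  | and₁ (X : ℕ) (C C' : NCon L) : FVa X C → FVa X (and C C')
  | and₂ (X : ℕ) (C C' : NCon L) : FVa X C' → FVa X (and C C')
  | ex (X X' : ℕ) (σ : NomSort L.NSort L.DSort) (C : NCon L) :
      X ≠ X' → FVa X C → FVa X (ex X' σ C)
  | nu (X : ℕ) (c : L.Name) (C : NCon L) : FVa X C → FVa X (nu c C)

/-- Well-sortedness of a constraint relative to a variable sort assignment. -/
def WS (vs : ℕ → NomSort L.NSort L.DSort) : NCon L → Prop
  | tt => True
  | eq t u => ∃ σ, TmS vs t σ ∧ TmS vs u σ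
  | fr _ t => ∃ σ, TmS vs t σ
  | sim t u => ∃ σ, TmS vs t σ ∧ TmS vs u σ
  | simA A B => AtomS vs A ∧ AtomS vs B
  | aeqA A B => AtomS vs A ∧ AtomS vs B
  | and C C' => WS vs C ∧ WS vs C'
  | ex X σ C => WS (Function.update vs X σ) C
  | nu _ C => WS vs C

end NCon

/-- Satisfaction `⊨ C` of a (closed) constraint. -/
def ConSat : NCon L → Prop
  | NCon.tt => True
  | NCon.eq t u => Aeq t u
  | NCon.fr a t => Fresh a t
  | NCon.sim t u => SimTm t u
  | NCon.simA A B => AtomSim A B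
  | NCon.aeqA A B => AtomAeq A B
  | NCon.and C C' => ConSat C ∧ ConSat C'
  | NCon.ex X σ C => ∃ t : Tm L, IsTm t σ ∧ ConSat (C.subst (substSingle X t))
  | NCon.nu a C => ∀ b : L.Name, b.1 = a.1 → ¬ NCon.FNa b (NCon.nu a C) → ConSat (C.swap b a)
termination_by C => C.size
decreasing_by all_goals (simp [NCon.size]; try omega)
/-! ### Goals -/

/-- Goal formulas `G`. -/
inductive NGoal (L : NomSig) : Type
  | tt : NGoal L
  | atom (A : NAtom L) : NGoal L
  | con (C : NCon L) : NGoal L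
  | and (G G' : NGoal L) : NGoal L
  | or (G G' : NGoal L) : NGoal L
  | ex (X : ℕ) (σ : NomSort L.NSort L.DSort) (G : NGoal L) : NGoal L
  | nu (a : L.Name) (G : NGoal L) : NGoal L

namespace NGoal

def rename (f : L.Name → L.Name) : NGoal L → NGoal L
  | tt => tt
  | atom A => atom (A.rename f)
  | con C => con (C.rename f)
  | and G G' => and (rename f G) (rename f G')
  | or G G' => or (rename f G) (rename f G')
  | ex X σ G => ex X σ (rename f G)
  | nu a G => nu (f a) (rename f G)

def swap (a b : L.Name) (G : NGoal L) : NGoal L := G.rename (swapName a b)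

def subst (θ : ℕ → Tm L) : NGoal L → NGoal L
  | tt => tt
  | atom A => atom (A.subst θ)
  | con C => con (C.subst θ)
  | and G G' => and (subst θ G) (subst θ G')
  | or G G' => or (subst θ G) (subst θ G')
  | ex X σ G => ex X σ (subst (Function.update θ X (Tm.var X)) G)
  | nu a G => nu a (subst θ G)

def size : NGoal L → ℕ
  | and G G' => size G + size G' + 1
  | or G G' => size G + size G' + 1
  | ex _ _ G => size G + 1
  | nu _ G => size G + 1
  | _ => 1

@[simp] theorem size_rename (f : L.Name → L.Name) :
    ∀ G : NGoal L, (G.rename f).size = G.size := by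
  intro G; induction G <;> simp [rename, size, *]

@[simp] theorem size_swap (a b : L.Name) (G : NGoal L) : (G.swap a b).size = G.size :=
  size_rename _ G

@[simp] theorem size_subst :
    ∀ (G : NGoal L) (θ : ℕ → Tm L), (G.subst θ).size = G.size := by
  intro G; induction G <;> intro θ <;> simp [subst, size, *]

/-- Free names of a goal. -/
inductive FNa : L.Name → NGoal L → Prop
  | atom (a : L.Name) (A : NAtom L) : NAtom.FNa a A → FNa a (atom A)
  | con (a : L.Name) (C : NCon L) : NCon.FNa a C → FNa a (con C)
  | and₁ (a : L.Name) (G G' : NGoal L) : FNa a G → FNa a (and G G')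
  | and₂ (a : L.Name) (G G' : NGoal L) : FNa a G' → FNa a (and G G')
  | or₁ (a : L.Name) (G G' : NGoal L) : FNa a G → FNa a (or G G')
  | or₂ (a : L.Name) (G G' : NGoal L) : FNa a G' → FNa a (or G G')
  | ex (a : L.Name) (X : ℕ) (σ : NomSort L.NSort L.DSort) (G : NGoal L) :
      FNa a G → FNa a (ex X σ G)
  | nu (a c : L.Name) (G : NGoal L) : a ≠ c → FNa a G → FNa a (nu c G)

/-- Free variables of a goal. -/
inductive FVa : ℕ → NGoal L → Prop
  | atom (X : ℕ) (A : NAtom L) : NAtom.FVa X A → FVa X (atom A)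
  | con (X : ℕ) (C : NCon L) : NCon.FVa X C → FVa X (con C)
  | and₁ (X : ℕ) (G G' : NGoal L) : FVa X G → FVa X (and G G')
  | and₂ (X : ℕ) (G G' : NGoal L) : FVa X G' → FVa X (and G G')
  | or₁ (X : ℕ) (G G' : NGoal L) : FVa X G → FVa X (or G G')
  | or₂ (X : ℕ) (G G' : NGoal L) : FVa X G' → FVa X (or G G')
  | ex (X X' : ℕ) (σ : NomSort L.NSort L.DSort) (G : NGoal L) :
      X ≠ X' → FVa X G → FVa X (ex X' σ G)
  | nu (X : ℕ) (c : L.Name) (G : NGoal L) : FVa X G → FVa X (nu c G)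

/-- Well-sortedness of a goal relative to a variable sort assignment. -/
def WS (vs : ℕ → NomSort L.NSort L.DSort) : NGoal L → Prop
  | tt => True
  | atom A => AtomS vs A
  | con C => NCon.WS vs C
  | and G G' => WS vs G ∧ WS vs G'
  | or G G' => WS vs G ∧ WS vs G'
  | ex X σ G => WS (Function.update vs X σ) G
  | nu _ G => WS vs G

end NGoal

/-- Satisfaction `S ⊨ G` of a (closed) goal by a Herbrand interpretation. -/
def GoalSat (S : Set (NAtom L)) : NGoal L → Prop
  | NGoal.tt => True
  | NGoal.atom A => A ∈ S
  | NGoal.con C => ConSat C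
  | NGoal.and G G' => GoalSat S G ∧ GoalSat S G'
  | NGoal.or G G' => GoalSat S G ∨ GoalSat S G'
  | NGoal.ex X σ G => ∃ t : Tm L, IsTm t σ ∧ GoalSat S (G.subst (substSingle X t))
  | NGoal.nu a G => ∀ b : L.Name, b.1 = a.1 → ¬ NGoal.FNa b (NGoal.nu a G) →
      GoalSat S (G.swap b a)
termination_by G => G.size
decreasing_by all_goals (simp [NGoal.size]; try omega)

/-! ### Program clauses -/

/-- Program clauses `D`. -/
inductive NCl (L : NomSig) : Type
  | tt : NCl L
  | atom (A : NAtom L) : NCl L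
  | and (D D' : NCl L) : NCl L
  | imp (G : NGoal L) (D : NCl L) : NCl L
  | all (X : ℕ) (σ : NomSort L.NSort L.DSort) (D : NCl L) : NCl L
  | nu (a : L.Name) (D : NCl L) : NCl L

namespace NCl

def rename (f : L.Name → L.Name) : NCl L → NCl L
  | tt => tt
  | atom A => atom (A.rename f)
  | and D D' => and (rename f D) (rename f D')
  | imp G D => imp (G.rename f) (rename f D)
  | all X σ D => all X σ (rename f D)
  | nu a D => nu (f a) (rename f D)

def swap (a b : L.Name) (D : NCl L) : NCl L := D.rename (swapName a b)

def subst (θ : ℕ → Tm L) : NCl L → NCl L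
  | tt => tt
  | atom A => atom (A.subst θ)
  | and D D' => and (subst θ D) (subst θ D')
  | imp G D => imp (G.subst θ) (subst θ D)
  | all X σ D => all X σ (subst (Function.update θ X (Tm.var X)) D)
  | nu a D => nu a (subst θ D)

def size : NCl L → ℕ
  | and D D' => size D + size D' + 1
  | imp _ D => size D + 1
  | all _ _ D => size D + 1
  | nu _ D => size D + 1
  | _ => 1

@[simp] theorem size_rename (f : L.Name → L.Name) :
    ∀ D : NCl L, (D.rename f).size = D.size := by
  intro D; induction D <;> simp [rename, size, *]

@[simp] theorem size_swap (a b : L.Name) (D : NCl L) : (D.swap a b).size = D.size :=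
  size_rename _ D

@[simp] theorem size_subst :
    ∀ (D : NCl L) (θ : ℕ → Tm L), (D.subst θ).size = D.size := by
  intro D; induction D <;> intro θ <;> simp [subst, size, *]

/-- Free names of a program clause. -/
inductive FNa : L.Name → NCl L → Prop
  | atom (a : L.Name) (A : NAtom L) : NAtom.FNa a A → FNa a (atom A)
  | and₁ (a : L.Name) (D D' : NCl L) : FNa a D → FNa a (and D D')
  | and₂ (a : L.Name) (D D' : NCl L) : FNa a D' → FNa a (and D D')
  | imp₁ (a : L.Name) (G : NGoal L) (D : NCl L) : NGoal.FNa a G → FNa a (imp G D)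
  | imp₂ (a : L.Name) (G : NGoal L) (D : NCl L) : FNa a D → FNa a (imp G D)
  | all (a : L.Name) (X : ℕ) (σ : NomSort L.NSort L.DSort) (D : NCl L) :
      FNa a D → FNa a (all X σ D)
  | nu (a c : L.Name) (D : NCl L) : a ≠ c → FNa a D → FNa a (nu c D)

/-- Free variables of a program clause. -/
inductive FVa : ℕ → NCl L → Prop
  | atom (X : ℕ) (A : NAtom L) : NAtom.FVa X A → FVa X (atom A)
  | and₁ (X : ℕ) (D D' : NCl L) : FVa X D → FVa X (and D D')
  | and₂ (X : ℕ) (D D' : NCl L) : FVa X D' → FVa X (and D D')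
  | imp₁ (X : ℕ) (G : NGoal L) (D : NCl L) : NGoal.FVa X G → FVa X (imp G D)
  | imp₂ (X : ℕ) (G : NGoal L) (D : NCl L) : FVa X D → FVa X (imp G D)
  | all (X X' : ℕ) (σ : NomSort L.NSort L.DSort) (D : NCl L) :
      X ≠ X' → FVa X D → FVa X (all X' σ D)
  | nu (X : ℕ) (c : L.Name) (D : NCl L) : FVa X D → FVa X (nu c D)

/-- Well-sortedness of a program clause relative to a variable sort assignment. -/
def WS (vs : ℕ → NomSort L.NSort L.DSort) : NCl L → Prop
  | tt => True
  | atom A => AtomS vs A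
  | and D D' => WS vs D ∧ WS vs D'
  | imp G D => NGoal.WS vs G ∧ WS vs D
  | all X σ D => WS (Function.update vs X σ) D
  | nu _ D => WS vs D

/-- A clause with no free variables. -/
def ClosedV (D : NCl L) : Prop := ∀ X : ℕ, ¬ FVa X D

/-- A clause with no free names. -/
def ClosedN (D : NCl L) : Prop := ∀ a : L.Name, ¬ FNa a D

/-- И-goal clauses: no И-quantified clause subformulas (goals may contain И). -/
inductive NuGoal : NCl L → Prop
  | tt : NuGoal tt
  | atom (A : NAtom L) : NuGoal (atom A)
  | and (D D' : NCl L) : NuGoal D → NuGoal D' → NuGoal (and D D')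
  | imp (G : NGoal L) (D : NCl L) : NuGoal D → NuGoal (imp G D)
  | all (X : ℕ) (σ : NomSort L.NSort L.DSort) (D : NCl L) : NuGoal D → NuGoal (all X σ D)

end NCl

/-- Satisfaction `S ⊨ D` of a (closed) program clause. -/
def ClSat (S : Set (NAtom L)) : NCl L → Prop
  | NCl.tt => True
  | NCl.atom A => A ∈ S
  | NCl.and D D' => ClSat S D ∧ ClSat S D'
  | NCl.imp G D => GoalSat S G → ClSat S D
  | NCl.all X σ D => ∀ t : Tm L, IsTm t σ → ClSat S (D.subst (substSingle X t))
  | NCl.nu a D => ∀ b : L.Name, b.1 = a.1 → ¬ NCl.FNa b (NCl.nu a D) →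
      ClSat S (D.swap b a)
termination_by D => D.size
decreasing_by all_goals (simp [NCl.size]; try omega)
/-! ### General first-order nominal formulas -/

/-- Formulas of nominal logic. -/
inductive NFm (L : NomSig) : Type
  | tt : NFm L
  | ff : NFm L
  | atom (A : NAtom L) : NFm L
  | eq (t u : Tm L) : NFm L
  | fr (a : L.Name) (t : Tm L) : NFm L
  | sim (t u : Tm L) : NFm L
  | imp (φ ψ : NFm L) : NFm L
  | and (φ ψ : NFm L) : NFm L
  | or (φ ψ : NFm L) : NFm L
  | all (X : ℕ) (σ : NomSort L.NSort L.DSort) (φ : NFm L) : NFm L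
  | ex (X : ℕ) (σ : NomSort L.NSort L.DSort) (φ : NFm L) : NFm L
  | nu (a : L.Name) (φ : NFm L) : NFm L

namespace NFm

def rename (f : L.Name → L.Name) : NFm L → NFm L
  | tt => tt
  | ff => ff
  | atom A => atom (A.rename f)
  | eq t u => eq (t.rename f) (u.rename f)
  | fr a t => fr (f a) (t.rename f)
  | sim t u => sim (t.rename f) (u.rename f)
  | imp φ ψ => imp (rename f φ) (rename f ψ)
  | and φ ψ => and (rename f φ) (rename f ψ)
  | or φ ψ => or (rename f φ) (rename f ψ)
  | all X σ φ => all X σ (rename f φ)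
  | ex X σ φ => ex X σ (rename f φ)
  | nu a φ => nu (f a) (rename f φ)

/-- Swapping `(a b)·φ`. -/
def swap (a b : L.Name) (φ : NFm L) : NFm L := φ.rename (swapName a b)

def subst (θ : ℕ → Tm L) : NFm L → NFm L
  | tt => tt
  | ff => ff
  | atom A => atom (A.subst θ)
  | eq t u => eq (t.subst θ) (u.subst θ)
  | fr a t => fr a (t.subst θ)
  | sim t u => sim (t.subst θ) (u.subst θ)
  | imp φ ψ => imp (subst θ φ) (subst θ ψ)
  | and φ ψ => and (subst θ φ) (subst θ ψ)
  | or φ ψ => or (subst θ φ) (subst θ ψ)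
  | all X σ φ => all X σ (subst (Function.update θ X (Tm.var X)) φ)
  | ex X σ φ => ex X σ (subst (Function.update θ X (Tm.var X)) φ)
  | nu a φ => nu a (subst θ φ)

def size : NFm L → ℕ
  | imp φ ψ => size φ + size ψ + 1
  | and φ ψ => size φ + size ψ + 1
  | or φ ψ => size φ + size ψ + 1
  | all _ _ φ => size φ + 1
  | ex _ _ φ => size φ + 1
  | nu _ φ => size φ + 1
  | _ => 1

@[simp] theorem size_rename (f : L.Name → L.Name) :
    ∀ φ : NFm L, (φ.rename f).size = φ.size := by
  intro φ; induction φ <;> simp [rename, size, *]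

@[simp] theorem size_swap (a b : L.Name) (φ : NFm L) : (φ.swap a b).size = φ.size :=
  size_rename _ φ

@[simp] theorem size_subst :
    ∀ (φ : NFm L) (θ : ℕ → Tm L), (φ.subst θ).size = φ.size := by
  intro φ; induction φ <;> intro θ <;> simp [subst, size, *]

/-- Free names of a formula. -/
inductive FNa : L.Name → NFm L → Prop
  | atom (a : L.Name) (A : NAtom L) : NAtom.FNa a A → FNa a (atom A)
  | eq₁ (a : L.Name) (t u : Tm L) : Tm.FNa a t → FNa a (eq t u)
  | eq₂ (a : L.Name) (t u : Tm L) : Tm.FNa a u → FNa a (eq t u)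
  | frN (a : L.Name) (t : Tm L) : FNa a (fr a t)
  | frT (a c : L.Name) (t : Tm L) : Tm.FNa a t → FNa a (fr c t)
  | sim₁ (a : L.Name) (t u : Tm L) : Tm.FNa a t → FNa a (sim t u)
  | sim₂ (a : L.Name) (t u : Tm L) : Tm.FNa a u → FNa a (sim t u)
  | imp₁ (a : L.Name) (φ ψ : NFm L) : FNa a φ → FNa a (imp φ ψ)
  | imp₂ (a : L.Name) (φ ψ : NFm L) : FNa a ψ → FNa a (imp φ ψ)
  | and₁ (a : L.Name) (φ ψ : NFm L) : FNa a φ → FNa a (and φ ψ)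
  | and₂ (a : L.Name) (φ ψ : NFm L) : FNa a ψ → FNa a (and φ ψ)
  | or₁ (a : L.Name) (φ ψ : NFm L) : FNa a φ → FNa a (or φ ψ)
  | or₂ (a : L.Name) (φ ψ : NFm L) : FNa a ψ → FNa a (or φ ψ)
  | all (a : L.Name) (X : ℕ) (σ : NomSort L.NSort L.DSort) (φ : NFm L) :
      FNa a φ → FNa a (all X σ φ)
  | ex (a : L.Name) (X : ℕ) (σ : NomSort L.NSort L.DSort) (φ : NFm L) :
      FNa a φ → FNa a (ex X σ φ)
  | nu (a c : L.Name) (φ : NFm L) : a ≠ c → FNa a φ → FNa a (nu c φ)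

/-- Free variables of a formula. -/
inductive FVa : ℕ → NFm L → Prop
  | atom (X : ℕ) (A : NAtom L) : NAtom.FVa X A → FVa X (atom A)
  | eq₁ (X : ℕ) (t u : Tm L) : Tm.FVa X t → FVa X (eq t u)
  | eq₂ (X : ℕ) (t u : Tm L) : Tm.FVa X u → FVa X (eq t u)
  | frT (X : ℕ) (c : L.Name) (t : Tm L) : Tm.FVa X t → FVa X (fr c t)
  | sim₁ (X : ℕ) (t u : Tm L) : Tm.FVa X t → FVa X (sim t u)
  | sim₂ (X : ℕ) (t u : Tm L) : Tm.FVa X u → FVa X (sim t u)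
  | imp₁ (X : ℕ) (φ ψ : NFm L) : FVa X φ → FVa X (imp φ ψ)
  | imp₂ (X : ℕ) (φ ψ : NFm L) : FVa X ψ → FVa X (imp φ ψ)
  | and₁ (X : ℕ) (φ ψ : NFm L) : FVa X φ → FVa X (and φ ψ)
  | and₂ (X : ℕ) (φ ψ : NFm L) : FVa X ψ → FVa X (and φ ψ)
  | or₁ (X : ℕ) (φ ψ : NFm L) : FVa X φ → FVa X (or φ ψ)
  | or₂ (X : ℕ) (φ ψ : NFm L) : FVa X ψ → FVa X (or φ ψ)
  | all (X X' : ℕ) (σ : NomSort L.NSort L.DSort) (φ : NFm L) :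
      X ≠ X' → FVa X φ → FVa X (all X' σ φ)
  | ex (X X' : ℕ) (σ : NomSort L.NSort L.DSort) (φ : NFm L) :
      X ≠ X' → FVa X φ → FVa X (ex X' σ φ)
  | nu (X : ℕ) (c : L.Name) (φ : NFm L) : FVa X φ → FVa X (nu c φ)

end NFm

/-- Satisfaction `S ⊨ φ` of a (closed) formula by a Herbrand interpretation. -/
def FmSat (S : Set (NAtom L)) : NFm L → Prop
  | NFm.tt => True
  | NFm.ff => False
  | NFm.atom A => A ∈ S
  | NFm.eq t u => Aeq t u
  | NFm.fr a t => Fresh a t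
  | NFm.sim t u => SimTm t u
  | NFm.imp φ ψ => FmSat S φ → FmSat S ψ
  | NFm.and φ ψ => FmSat S φ ∧ FmSat S ψ
  | NFm.or φ ψ => FmSat S φ ∨ FmSat S ψ
  | NFm.all X σ φ => ∀ t : Tm L, IsTm t σ → FmSat S (φ.subst (substSingle X t))
  | NFm.ex X σ φ => ∃ t : Tm L, IsTm t σ ∧ FmSat S (φ.subst (substSingle X t))
  | NFm.nu a φ => ∀ b : L.Name, b.1 = a.1 → ¬ NFm.FNa b (NFm.nu a φ) →
      FmSat S (φ.swap b a)
termination_by φ => φ.size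
decreasing_by all_goals (simp [NFm.size]; try omega)
/-! ### Herbrand models and the one-step deduction operator -/

/-- A Herbrand model of a set of (closed) program clauses: an equivariant
subset of the Herbrand base satisfying every clause. -/
def IsHModel (Δ : Set (NCl L)) (H : Set (NAtom L)) : Prop :=
  H ⊆ BL L ∧ EquivariantSet H ∧ ∀ D ∈ Δ, ClSat H D

/-- The one-step deduction operator `T_D`. -/
def TOp : NCl L → Set (NAtom L) → Set (NAtom L)
  | NCl.tt, S => S
  | NCl.atom A, S => S ∪ {A}
  | NCl.and D D', S => TOp D S ∪ TOp D' S
  | NCl.imp G D, S => if GoalSat S G then TOp D S else S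
  | NCl.all X σ D, S => ⋃ (t : Tm L) (_ : IsTm t σ), TOp (D.subst (substSingle X t)) S
  | NCl.nu a D, S =>
      ⋃ (b : L.Name) (_ : b.1 = a.1 ∧ ¬ NCl.FNa b (NCl.nu a D)), TOp (D.swap a b) S
termination_by D _ => D.size
decreasing_by all_goals (simp [NCl.size]; try omega)

/-- The one-step deduction operator `T_Δ` of a (nonempty) program
`Δ = {D₁,…,Dₙ}`, i.e. `T_{D₁ ∧ ⋯ ∧ Dₙ}`. -/
def TProg (Δ : Set (NCl L)) (S : Set (NAtom L)) : Set (NAtom L) :=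
  ⋃ D ∈ Δ, TOp D S

/-! ### Contexts, substitutions and constraint entailment -/

/-- Context bindings: variable bindings `X:σ` and name bindings `#a:ν`. -/
inductive CtxBind (L : NomSig) : Type
  | v (X : ℕ) (σ : NomSort L.NSort L.DSort) : CtxBind L
  | n (a : L.Name) : CtxBind L

/-- Contexts, as lists of bindings with the *most recent binding first*. -/
abbrev Ctxx (L : NomSig) : Type := List (CtxBind L)

/-- The variables declared in a context. -/
def ctxVars : Ctxx L → Set ℕ
  | [] => ∅
  | CtxBind.v X _ :: Ξ => insert X (ctxVars Ξ)
  | CtxBind.n _ :: Ξ => ctxVars Ξ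

/-- The names declared in a context. -/
def ctxNames : Ctxx L → Set L.Name
  | [] => ∅
  | CtxBind.v _ _ :: Ξ => ctxNames Ξ
  | CtxBind.n a :: Ξ => insert a (ctxNames Ξ)

def CtxBind.key : CtxBind L → ℕ ⊕ L.Name
  | v X _ => Sum.inl X
  | n a => Sum.inr a

/-- All bindings of a context are distinct. -/
def CtxWF (Ξ : Ctxx L) : Prop := Ξ.Pairwise (fun b c => b.key ≠ c.key)

/-- `θ : Σ`: the ground substitution `θ` satisfies the context `Σ`. -/
def SubstOk : Ctxx L → (ℕ → Tm L) → Prop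
  | [], _ => True
  | CtxBind.v X σ :: Ξ, θ => IsTm (θ X) σ ∧ SubstOk Ξ θ
  | CtxBind.n a :: Ξ, θ => (∀ X ∈ ctxVars Ξ, Fresh a (θ X)) ∧ SubstOk Ξ θ

/-- `θ` satisfies every constraint in `∇`. -/
def SatAll (θ : ℕ → Tm L) (Φ : Finset (NCon L)) : Prop :=
  ∀ C ∈ Φ, ConSat (C.subst θ)

/-- Constraint entailment `Σ;∇ ⊨ C`. -/
def EntC (Ξ : Ctxx L) (Φ : Finset (NCon L)) (C : NCon L) : Prop :=
  ∀ θ : ℕ → Tm L, SubstOk Ξ θ → SatAll θ Φ → ConSat (C.subst θ)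

/-- The free variables and names of a constraint are declared in `Σ`. -/
def ConDecl (Ξ : Ctxx L) (C : NCon L) : Prop :=
  (∀ X, NCon.FVa X C → X ∈ ctxVars Ξ) ∧ (∀ a, NCon.FNa a C → a ∈ ctxNames Ξ)

/-- The free variables and names of a goal are declared in `Σ`. -/
def GoalDecl (Ξ : Ctxx L) (G : NGoal L) : Prop :=
  (∀ X, NGoal.FVa X G → X ∈ ctxVars Ξ) ∧ (∀ a, NGoal.FNa a G → a ∈ ctxNames Ξ)

/-- The free variables and names of a program clause are declared in `Σ`. -/
def ClDecl (Ξ : Ctxx L) (D : NCl L) : Prop :=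
  (∀ X, NCl.FVa X D → X ∈ ctxVars Ξ) ∧ (∀ a, NCl.FNa a D → a ∈ ctxNames Ξ)

/-- The free variables and names of an atom are declared in `Σ`. -/
def AtomDecl (Ξ : Ctxx L) (A : NAtom L) : Prop :=
  (∀ X, NAtom.FVa X A → X ∈ ctxVars Ξ) ∧ (∀ a, NAtom.FNa a A → a ∈ ctxNames Ξ)

/-! ### Uniform / focused proof search -/

mutual
/-- Uniform derivability `Σ;Δ;∇ ⟶ G`. -/
inductive UD (Δ : Set (NCl L)) : Ctxx L → Finset (NCon L) → NGoal L → Prop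
  | top (Ξ : Ctxx L) (Φ : Finset (NCon L)) : UD Δ Ξ Φ NGoal.tt
  | con (Ξ : Ctxx L) (Φ : Finset (NCon L)) (C : NCon L) :
      EntC Ξ Φ C → UD Δ Ξ Φ (NGoal.con C)
  | andR (Ξ : Ctxx L) (Φ : Finset (NCon L)) (G₁ G₂ : NGoal L) :
      UD Δ Ξ Φ G₁ → UD Δ Ξ Φ G₂ → UD Δ Ξ Φ (NGoal.and G₁ G₂)
  | orR₁ (Ξ : Ctxx L) (Φ : Finset (NCon L)) (G₁ G₂ : NGoal L) :
      UD Δ Ξ Φ G₁ → UD Δ Ξ Φ (NGoal.or G₁ G₂)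
  | orR₂ (Ξ : Ctxx L) (Φ : Finset (NCon L)) (G₁ G₂ : NGoal L) :
      UD Δ Ξ Φ G₂ → UD Δ Ξ Φ (NGoal.or G₁ G₂)
  | exR (Ξ : Ctxx L) (Φ : Finset (NCon L)) (X : ℕ) (σ : NomSort L.NSort L.DSort)
      (C : NCon L) (G : NGoal L) :
      EntC Ξ Φ (NCon.ex X σ C) → UD Δ (CtxBind.v X σ :: Ξ) (insert C Φ) G →
      UD Δ Ξ Φ (NGoal.ex X σ G)
  | nuR (Ξ : Ctxx L) (Φ : Finset (NCon L)) (a : L.Name) (C : NCon L) (G : NGoal L) :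
      EntC Ξ Φ (NCon.nu a C) → UD Δ (CtxBind.n a :: Ξ) (insert C Φ) G →
      UD Δ Ξ Φ (NGoal.nu a G)
  | sel (Ξ : Ctxx L) (Φ : Finset (NCon L)) (D : NCl L) (A : NAtom L) :
      D ∈ Δ → FD Δ Ξ Φ D A → UD Δ Ξ Φ (NGoal.atom A)

/-- Focused derivability `Σ;Δ;∇ ⟶ [D] ⇒ A`. -/
inductive FD (Δ : Set (NCl L)) : Ctxx L → Finset (NCon L) → NCl L → NAtom L → Prop
  | hyp (Ξ : Ctxx L) (Φ : Finset (NCon L)) (A' A : NAtom L) :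
      EntC Ξ Φ (NCon.simA A' A) → FD Δ Ξ Φ (NCl.atom A') A
  | andL₁ (Ξ : Ctxx L) (Φ : Finset (NCon L)) (D₁ D₂ : NCl L) (A : NAtom L) :
      FD Δ Ξ Φ D₁ A → FD Δ Ξ Φ (NCl.and D₁ D₂) A
  | andL₂ (Ξ : Ctxx L) (Φ : Finset (NCon L)) (D₁ D₂ : NCl L) (A : NAtom L) :
      FD Δ Ξ Φ D₂ A → FD Δ Ξ Φ (NCl.and D₁ D₂) A
  | impL (Ξ : Ctxx L) (Φ : Finset (NCon L)) (G : NGoal L) (D : NCl L) (A : NAtom L) :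
      FD Δ Ξ Φ D A → UD Δ Ξ Φ G → FD Δ Ξ Φ (NCl.imp G D) A
  | allL (Ξ : Ctxx L) (Φ : Finset (NCon L)) (X : ℕ) (σ : NomSort L.NSort L.DSort)
      (C : NCon L) (D : NCl L) (A : NAtom L) :
      EntC Ξ Φ (NCon.ex X σ C) → FD Δ (CtxBind.v X σ :: Ξ) (insert C Φ) D A →
      FD Δ Ξ Φ (NCl.all X σ D) A
  | nuL (Ξ : Ctxx L) (Φ : Finset (NCon L)) (a : L.Name) (C : NCon L) (D : NCl L)
      (A : NAtom L) :
      EntC Ξ Φ (NCon.nu a C) → FD Δ (CtxBind.n a :: Ξ) (insert C Φ) D A →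
      FD Δ Ξ Φ (NCl.nu a D) A
end

mutual
/-- Uniform derivability for ≈-resolution, `Σ;Δ;∇ ⟶≈ G`. -/
inductive UDe (Δ : Set (NCl L)) : Ctxx L → Finset (NCon L) → NGoal L → Prop
  | top (Ξ : Ctxx L) (Φ : Finset (NCon L)) : UDe Δ Ξ Φ NGoal.tt
  | con (Ξ : Ctxx L) (Φ : Finset (NCon L)) (C : NCon L) :
      EntC Ξ Φ C → UDe Δ Ξ Φ (NGoal.con C)
  | andR (Ξ : Ctxx L) (Φ : Finset (NCon L)) (G₁ G₂ : NGoal L) :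
      UDe Δ Ξ Φ G₁ → UDe Δ Ξ Φ G₂ → UDe Δ Ξ Φ (NGoal.and G₁ G₂)
  | orR₁ (Ξ : Ctxx L) (Φ : Finset (NCon L)) (G₁ G₂ : NGoal L) :
      UDe Δ Ξ Φ G₁ → UDe Δ Ξ Φ (NGoal.or G₁ G₂)
  | orR₂ (Ξ : Ctxx L) (Φ : Finset (NCon L)) (G₁ G₂ : NGoal L) :
      UDe Δ Ξ Φ G₂ → UDe Δ Ξ Φ (NGoal.or G₁ G₂)
  | exR (Ξ : Ctxx L) (Φ : Finset (NCon L)) (X : ℕ) (σ : NomSort L.NSort L.DSort)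
      (C : NCon L) (G : NGoal L) :
      EntC Ξ Φ (NCon.ex X σ C) → UDe Δ (CtxBind.v X σ :: Ξ) (insert C Φ) G →
      UDe Δ Ξ Φ (NGoal.ex X σ G)
  | nuR (Ξ : Ctxx L) (Φ : Finset (NCon L)) (a : L.Name) (C : NCon L) (G : NGoal L) :
      EntC Ξ Φ (NCon.nu a C) → UDe Δ (CtxBind.n a :: Ξ) (insert C Φ) G →
      UDe Δ Ξ Φ (NGoal.nu a G)
  | sel (Ξ : Ctxx L) (Φ : Finset (NCon L)) (D : NCl L) (A : NAtom L) :
      D ∈ Δ → FDe Δ Ξ Φ D A → UDe Δ Ξ Φ (NGoal.atom A)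

/-- Focused derivability for ≈-resolution, `Σ;Δ;∇ ⟶≈ [D] ⇒ A`. -/
inductive FDe (Δ : Set (NCl L)) : Ctxx L → Finset (NCon L) → NCl L → NAtom L → Prop
  | hyp (Ξ : Ctxx L) (Φ : Finset (NCon L)) (A' A : NAtom L) :
      EntC Ξ Φ (NCon.aeqA A' A) → FDe Δ Ξ Φ (NCl.atom A') A
  | andL₁ (Ξ : Ctxx L) (Φ : Finset (NCon L)) (D₁ D₂ : NCl L) (A : NAtom L) :
      FDe Δ Ξ Φ D₁ A → FDe Δ Ξ Φ (NCl.and D₁ D₂) A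
  | andL₂ (Ξ : Ctxx L) (Φ : Finset (NCon L)) (D₁ D₂ : NCl L) (A : NAtom L) :
      FDe Δ Ξ Φ D₂ A → FDe Δ Ξ Φ (NCl.and D₁ D₂) A
  | impL (Ξ : Ctxx L) (Φ : Finset (NCon L)) (G : NGoal L) (D : NCl L) (A : NAtom L) :
      FDe Δ Ξ Φ D A → UDe Δ Ξ Φ G → FDe Δ Ξ Φ (NCl.imp G D) A
  | allL (Ξ : Ctxx L) (Φ : Finset (NCon L)) (X : ℕ) (σ : NomSort L.NSort L.DSort)
      (C : NCon L) (D : NCl L) (A : NAtom L) :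
      EntC Ξ Φ (NCon.ex X σ C) → FDe Δ (CtxBind.v X σ :: Ξ) (insert C Φ) D A →
      FDe Δ Ξ Φ (NCl.all X σ D) A
  | nuL (Ξ : Ctxx L) (Φ : Finset (NCon L)) (a : L.Name) (C : NCon L) (D : NCl L)
      (A : NAtom L) :
      EntC Ξ Φ (NCon.nu a C) → FDe Δ (CtxBind.n a :: Ξ) (insert C Φ) D A →
      FDe Δ Ξ Φ (NCl.nu a D) A
end

/-! ### Residuated proof search -/

mutual
/-- Residuated uniform derivability `Σ;Δ ⟶ G ↘ C`. -/
inductive RG (Δ : Set (NCl L)) : Ctxx L → NGoal L → NCon L → Prop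
  | con (Ξ : Ctxx L) (C : NCon L) : RG Δ Ξ (NGoal.con C) C
  | top (Ξ : Ctxx L) : RG Δ Ξ NGoal.tt NCon.tt
  | andR (Ξ : Ctxx L) (G₁ G₂ : NGoal L) (C₁ C₂ : NCon L) :
      RG Δ Ξ G₁ C₁ → RG Δ Ξ G₂ C₂ → RG Δ Ξ (NGoal.and G₁ G₂) (NCon.and C₁ C₂)
  | orR₁ (Ξ : Ctxx L) (G₁ G₂ : NGoal L) (C : NCon L) :
      RG Δ Ξ G₁ C → RG Δ Ξ (NGoal.or G₁ G₂) C
  | orR₂ (Ξ : Ctxx L) (G₁ G₂ : NGoal L) (C : NCon L) :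
      RG Δ Ξ G₂ C → RG Δ Ξ (NGoal.or G₁ G₂) C
  | exR (Ξ : Ctxx L) (X : ℕ) (σ : NomSort L.NSort L.DSort) (G : NGoal L) (C : NCon L) :
      RG Δ (CtxBind.v X σ :: Ξ) G C → RG Δ Ξ (NGoal.ex X σ G) (NCon.ex X σ C)
  | nuR (Ξ : Ctxx L) (a : L.Name) (G : NGoal L) (C : NCon L) :
      RG Δ (CtxBind.n a :: Ξ) G C → RG Δ Ξ (NGoal.nu a G) (NCon.nu a C)
  | back (Ξ : Ctxx L) (A : NAtom L) (D : NCl L) (G : NGoal L) (C : NCon L) :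
      D ∈ Δ → RF Δ Ξ D A G → RG Δ Ξ G C → RG Δ Ξ (NGoal.atom A) C

/-- Residuated focused derivability `Σ;Δ ⟶ [D] ⇒ A ↘ G`. -/
inductive RF (Δ : Set (NCl L)) : Ctxx L → NCl L → NAtom L → NGoal L → Prop
  | hyp (Ξ : Ctxx L) (A' A : NAtom L) :
      RF Δ Ξ (NCl.atom A') A (NGoal.con (NCon.simA A A'))
  | andL₁ (Ξ : Ctxx L) (D₁ D₂ : NCl L) (A : NAtom L) (G : NGoal L) :
      RF Δ Ξ D₁ A G → RF Δ Ξ (NCl.and D₁ D₂) A G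
  | andL₂ (Ξ : Ctxx L) (D₁ D₂ : NCl L) (A : NAtom L) (G : NGoal L) :
      RF Δ Ξ D₂ A G → RF Δ Ξ (NCl.and D₁ D₂) A G
  | impL (Ξ : Ctxx L) (G : NGoal L) (D : NCl L) (A : NAtom L) (G' : NGoal L) :
      RF Δ Ξ D A G' → RF Δ Ξ (NCl.imp G D) A (NGoal.and G G')
  | allL (Ξ : Ctxx L) (X : ℕ) (σ : NomSort L.NSort L.DSort) (D : NCl L) (A : NAtom L)
      (G : NGoal L) :
      RF Δ (CtxBind.v X σ :: Ξ) D A G → RF Δ Ξ (NCl.all X σ D) A (NGoal.ex X σ G)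
  | nuL (Ξ : Ctxx L) (a : L.Name) (D : NCl L) (A : NAtom L) (G : NGoal L) :
      RF Δ (CtxBind.n a :: Ξ) D A G → RF Δ Ξ (NCl.nu a D) A (NGoal.nu a G)
end

/-! ### Operational semantics -/

/-- Operational states `⟨Σ; Γ; ∇⟩`. -/
structure OState (L : NomSig) : Type where
  ctx : Ctxx L
  goals : List (NGoal L)
  cons : Finset (NCon L)

/-- The operational transition relation relative to a program `Δ`. -/
inductive OStep (Δ : Set (NCl L)) : OState L → OState L → Prop
  | back (Ξ : Ctxx L) (Φ : Finset (NCon L)) (Γ : List (NGoal L)) (D : NCl L)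
      (A : NAtom L) (G : NGoal L) :
      D ∈ Δ → RF Δ Ξ D A G →
      OStep Δ ⟨Ξ, NGoal.atom A :: Γ, Φ⟩ ⟨Ξ, G :: Γ, Φ⟩
  | con (Ξ : Ctxx L) (Φ : Finset (NCon L)) (Γ : List (NGoal L)) (C : NCon L) :
      (∃ θ : ℕ → Tm L, SubstOk Ξ θ ∧ SatAll θ (insert C Φ)) →
      OStep Δ ⟨Ξ, NGoal.con C :: Γ, Φ⟩ ⟨Ξ, Γ, insert C Φ⟩
  | top (Ξ : Ctxx L) (Φ : Finset (NCon L)) (Γ : List (NGoal L)) :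
      OStep Δ ⟨Ξ, NGoal.tt :: Γ, Φ⟩ ⟨Ξ, Γ, Φ⟩
  | and (Ξ : Ctxx L) (Φ : Finset (NCon L)) (Γ : List (NGoal L)) (G₁ G₂ : NGoal L) :
      OStep Δ ⟨Ξ, NGoal.and G₁ G₂ :: Γ, Φ⟩ ⟨Ξ, G₁ :: G₂ :: Γ, Φ⟩
  | or₁ (Ξ : Ctxx L) (Φ : Finset (NCon L)) (Γ : List (NGoal L)) (G₁ G₂ : NGoal L) :
      OStep Δ ⟨Ξ, NGoal.or G₁ G₂ :: Γ, Φ⟩ ⟨Ξ, G₁ :: Γ, Φ⟩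
  | or₂ (Ξ : Ctxx L) (Φ : Finset (NCon L)) (Γ : List (NGoal L)) (G₁ G₂ : NGoal L) :
      OStep Δ ⟨Ξ, NGoal.or G₁ G₂ :: Γ, Φ⟩ ⟨Ξ, G₂ :: Γ, Φ⟩
  | ex (Ξ : Ctxx L) (Φ : Finset (NCon L)) (Γ : List (NGoal L)) (X : ℕ)
      (σ : NomSort L.NSort L.DSort) (G : NGoal L) :
      OStep Δ ⟨Ξ, NGoal.ex X σ G :: Γ, Φ⟩ ⟨CtxBind.v X σ :: Ξ, G :: Γ, Φ⟩
  | nu (Ξ : Ctxx L) (Φ : Finset (NCon L)) (Γ : List (NGoal L)) (a : L.Name)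
      (G : NGoal L) :
      OStep Δ ⟨Ξ, NGoal.nu a G :: Γ, Φ⟩ ⟨CtxBind.n a :: Ξ, G :: Γ, Φ⟩

/-- `∃Σ[C]`: close a constraint by quantifying over all bindings of a context
(innermost quantifier for the most recent binding). -/
def exCtx : Ctxx L → NCon L → NCon L
  | [], C => C
  | CtxBind.v X σ :: Ξ, C => exCtx Ξ (NCon.ex X σ C)
  | CtxBind.n a :: Ξ, C => exCtx Ξ (NCon.nu a C)

/-- The conjunction of a finite set of constraints. -/
def bigAnd (Φ : Finset (NCon L)) : NCon L := Φ.toList.foldr NCon.and NCon.tt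
theorem swapName_comm (a b : L.Name) : swapName a b = swapName b a := by
  funext c
  unfold swapName
  split_ifs <;> simp_all

/-- Clauses whose one-step consequences over `M` already lie in `M` hold in `M`. The induction is on
the size of `D`, since the instances of a quantified clause are not subterms of it. -/
theorem clSat_of_TOp_subset (M : Set (NAtom L)) (D : NCl L) (h : TOp D M ⊆ M) : ClSat M D := by
  induction hn : D.size using Nat.strong_induction_on generalizing D with
  | _ n ih =>
    subst hn
    cases D with
    | tt => simp [ClSat]
    | atom A =>
      rw [TOp] at h
      rw [ClSat]
      exact h (Or.inr rfl)
    | and D D' =>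
      rw [TOp] at h
      rw [ClSat]
      exact ⟨ih D.size (by simp [NCl.size]) D (fun _ hx => h (Or.inl hx)) rfl,
        ih D'.size (by simp [NCl.size]) D' (fun _ hx => h (Or.inr hx)) rfl⟩
    | imp G D =>
      rw [TOp] at h
      rw [ClSat]
      intro hG
      rw [if_pos hG] at h
      exact ih D.size (by simp [NCl.size]) D h rfl
    | all X σ D =>
      rw [TOp] at h
      rw [ClSat]
      intro t ht
      exact ih _ (by simp [NCl.size]) (D.subst (substSingle X t))
        (fun _ hx => h (Set.mem_iUnion₂.2 ⟨t, ht, hx⟩)) rfl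
    | nu a D =>
      rw [TOp] at h
      rw [ClSat]
      intro b hb hfresh
      -- `ClSat` uses the swapping `(b a)` where `TOp` uses `(a b)`.
      have hswap : D.swap b a = D.swap a b := by
        rw [NCl.swap, NCl.swap, swapName_comm]
      rw [hswap]
      exact ih _ (by simp [NCl.size]) (D.swap a b)
        (fun _ hx => h (Set.mem_iUnion₂.2 ⟨b, ⟨hb, hfresh⟩, hx⟩)) rfl

/-! **Statement 6.**  Fixed points of the one-step deduction operator are
models. -/
theorem stmt6 (L : NomSig)
    (hinhab : ∀ σ : NomSort L.NSort L.DSort, ∃ t : Tm L, IsTm t σ)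
    (Δ : Set (NCl L)) (hfin : Δ.Finite) (hne : Δ.Nonempty)
    (hclv : ∀ D ∈ Δ, NCl.ClosedV D)
    (M : Set (NAtom L)) (hM : M ⊆ BL L) (hfix : TProg Δ M = M) :
    ∀ D ∈ Δ, ClSat M D := by
  intro D hD
  refine clSat_of_TOp_subset M D fun A hA => ?_
  rw [← hfix]
  exact Set.mem_iUnion₂.2 ⟨D, hD, hA⟩

end
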